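/- Let $X$ be a standard Borel space with a Borel probability measure $\mu$, let $Y$ be a compact metrizable space, and let $p: Y \to X$ be a Borel map such that $\mu(p(Y)) = 1$ and such that $p^{-1}(x)$ is compact for $\mu$-almost all $x \in X$. Then the set $M = \{\sigma \in P(Y) : p_*\sigma = \mu\}$ is a non-empty convex closed (hence compact) subset of $P(Y)$ in the weak* topology. -/

import Mathlib

open MeasureTheory
open scoped ENNReal NNReal

/-- Boxes `{x | ∀ i, x i ≤ N i}` in the Baire space are compact. -/
lemma isCompact_setOf_forall_le (N : ℕ → ℕ) : IsCompact {x : ℕ → ℕ | ∀ i, x i ≤ N i} := by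
  convert isCompact_univ_pi (fun i => (Set.finite_Iic (N i)).isCompact) using 1
  ext x
  simp [Pi.le_def]

/-- A neighbourhood of the compact box `{x | ∀ i, x i ≤ N i}` of the Baire space contains a
finite-level box. -/
lemma exists_forall_lt_le_subset_of_isOpen {V : Set (ℕ → ℕ)} (hV : IsOpen V) {N : ℕ → ℕ}
    (hNV : {x : ℕ → ℕ | ∀ i, x i ≤ N i} ⊆ V) :
    ∃ k, {x : ℕ → ℕ | ∀ i < k, x i ≤ N i} ⊆ V := by
  have hcyl : ∀ x ∈ V, ∃ m, PiNat.cylinder x m ⊆ V := by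
    intro x hx
    obtain ⟨-, ⟨⟨y, m, rfl⟩, hxy, hsub⟩⟩ :=
      (PiNat.isTopologicalBasis_cylinders (fun _ : ℕ => ℕ)).exists_subset_of_mem_open hx hV
    exact ⟨m, by rwa [PiNat.mem_cylinder_iff_eq.1 hxy]⟩
  choose! m hm using hcyl
  obtain ⟨t, htK, hKt⟩ := (isCompact_setOf_forall_le N).elim_nhds_subcover
    (fun x => PiNat.cylinder x (m x))
    (fun x _ => (PiNat.isOpen_cylinder _ x (m x)).mem_nhds (PiNat.self_mem_cylinder x (m x)))
  refine ⟨t.sup m, fun y hy => ?_⟩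
  have hz : (fun i => min (y i) (N i)) ∈ {x : ℕ → ℕ | ∀ i, x i ≤ N i} := fun i => min_le_right _ _
  obtain ⟨x, hxt, hxz⟩ := Set.mem_iUnion₂.1 (hKt hz)
  refine hm x (hNV (htK x hxt)) fun i hi => ?_
  rw [← hxz i hi]
  exact (min_eq_left (hy i (hi.trans_le (Finset.le_sup (f := m) hxt)))).symm

/-- An analytic set is inner regular with respect to compact sets, for the outer measure
associated with a finite Borel measure. -/
lemma MeasureTheory.AnalyticSet.exists_isCompact_le_measure {X : Type*} [TopologicalSpace X]
    [MeasurableSpace X] {μ : Measure X} [μ.OuterRegular] {A : Set X} (hA : AnalyticSet A)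
    {c : ℝ≥0∞} (hc : c < μ A) : ∃ K ⊆ A, IsCompact K ∧ c ≤ μ K := by
  rw [AnalyticSet] at hA
  obtain rfl | ⟨f, hf, rfl⟩ := hA
  · simp at hc
  have step : ∀ (k : ℕ) (C : {C : Set (ℕ → ℕ) // c < μ (f '' C)}),
      ∃ m : ℕ, c < μ (f '' (C.1 ∩ {x | x k ≤ m})) := by
    intro k C
    have hmono : Monotone fun m : ℕ => f '' (C.1 ∩ {x | x k ≤ m}) := fun a b hab =>
      Set.image_mono (Set.inter_subset_inter_right _ fun x (hx : x k ≤ a) => hx.trans hab)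
    have hU : ⋃ m : ℕ, f '' (C.1 ∩ {x | x k ≤ m}) = f '' C.1 := by
      rw [← Set.image_iUnion, ← Set.inter_iUnion]
      congr 1
      refine Set.inter_eq_left.2 fun x _ => Set.mem_iUnion.2 ⟨x k, le_refl (x k)⟩
    have h := C.2
    rwa [← hU, hmono.measure_iUnion, lt_iSup_iff] at h
  choose m hm using step
  let C : ℕ → {C : Set (ℕ → ℕ) // c < μ (f '' C)} := fun k =>
    Nat.rec ⟨Set.univ, by rwa [Set.image_univ]⟩ (fun k C => ⟨_, hm k C⟩) k
  let N : ℕ → ℕ := fun k => m k (C k)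
  have hC : ∀ k, (C k).1 = {x | ∀ i < k, x i ≤ N i} := by
    intro k
    induction k with
    | zero => simp [C]
    | succ k ih =>
      change (C k).1 ∩ {x | x k ≤ N k} = _
      rw [ih]
      ext x
      exact Nat.forall_lt_succ_right.symm
  refine ⟨f '' {x | ∀ i, x i ≤ N i}, Set.image_subset_range _ _, (isCompact_setOf_forall_le N).image hf,
    ?_⟩
  rw [Set.measure_eq_iInf_isOpen]
  refine le_iInf₂ fun U hU => le_iInf fun hUo => ?_
  obtain ⟨k, hk⟩ := exists_forall_lt_le_subset_of_isOpen (hUo.preimage hf)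
    (Set.image_subset_iff.1 hU)
  rw [← hC] at hk
  exact (C k).2.le.trans (measure_mono (Set.image_subset_iff.2 hk))

/-- Analytic sets are universally measurable. -/
lemma MeasureTheory.AnalyticSet.nullMeasurableSet {X : Type*} [TopologicalSpace X] [T2Space X]
    [MeasurableSpace X] [OpensMeasurableSpace X] {μ : Measure X} [IsFiniteMeasure μ]
    [μ.OuterRegular] {A : Set X} (hA : AnalyticSet A) : NullMeasurableSet A μ := by
  rcases eq_or_ne (μ A) 0 with h0 | h0
  · exact NullMeasurableSet.of_null h0
  obtain ⟨c, -, hc, hlim⟩ := exists_seq_strictMono_tendsto' (pos_iff_ne_zero.2 h0)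
  choose K hKA hK hcK using fun n => hA.exists_isCompact_le_measure (hc n).2
  have hU : MeasurableSet (⋃ n, K n) := .iUnion fun n => (hK n).measurableSet
  refine hU.nullMeasurableSet.congr
    (ae_eq_of_subset_of_measure_ge (Set.iUnion_subset hKA) ?_ hU.nullMeasurableSet
      (measure_ne_top μ A))
  exact le_of_tendsto' hlim fun n => (hcK n).trans (measure_mono (Set.subset_iUnion K n))

/-- The image of a Borel set under a Borel map between standard Borel spaces is universally
measurable. -/
lemma MeasurableSet.nullMeasurableSet_image {X Y : Type*} [MeasurableSpace X]
    [StandardBorelSpace X] [MeasurableSpace Y] [StandardBorelSpace Y] {μ : Measure X}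
    [IsFiniteMeasure μ] {p : Y → X} (hp : Measurable p) {s : Set Y} (hs : MeasurableSet s) :
    NullMeasurableSet (p '' s) μ := by
  let _ := upgradeStandardBorel X
  exact (hs.analyticSet_image hp).nullMeasurableSet

/-- A Lusin-type property: a Borel map with almost everywhere closed fibers has closed preimages
of sets of almost full measure. -/
lemma exists_subset_isClosed_preimage {X Y : Type*} [MeasurableSpace X] [StandardBorelSpace X]
    (μ : Measure X) [IsFiniteMeasure μ] [TopologicalSpace Y] [PolishSpace Y] [MeasurableSpace Y]
    [BorelSpace Y] {p : Y → X} (hp : Measurable p) (hfib : ∀ᵐ x ∂μ, IsClosed (p ⁻¹' {x}))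
    {B : Set X} (hB : MeasurableSet B) {c : ℝ≥0∞} (hc : c < μ B) :
    ∃ K ⊆ B, MeasurableSet K ∧ IsClosed (p ⁻¹' K) ∧ c < μ K := by
  let _ := upgradeStandardBorel X
  let b := TopologicalSpace.countableBasis Y
  have hb : TopologicalSpace.IsTopologicalBasis b := TopologicalSpace.isBasis_countableBasis Y
  have : Countable b := (TopologicalSpace.countable_countableBasis Y).to_subtype
  obtain ⟨ε, hε, hsum⟩ := ENNReal.exists_pos_sum_of_countable (tsub_pos_of_lt hc).ne' b
  have happrox : ∀ u : b, ∃ D ⊆ p '' u.1, IsCompact D ∧ μ (p '' u.1 \ D) < ε u := by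
    intro u
    have hnull : NullMeasurableSet (p '' u.1) μ :=
      (hb.isOpen u.2).measurableSet.nullMeasurableSet_image hp
    obtain ⟨t, htA, ht, hAt⟩ := hnull.exists_measurable_subset_ae_eq
    obtain ⟨D, hDt, hD, hlt⟩ := ht.exists_isCompact_sdiff_lt (measure_ne_top μ t)
      (ENNReal.coe_ne_zero.2 (hε u).ne')
    refine ⟨D, hDt.trans htA, hD, ?_⟩
    rwa [← measure_congr (hAt.diff (ae_eq_refl D))]
  choose D hDA hD hDε using happrox
  let E : Set X := (⋃ u, p '' u.1 \ D u) ∪ {x | ¬ IsClosed (p ⁻¹' {x})}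
  have hE : μ E < μ B - c := by
    refine lt_of_le_of_lt ?_ hsum
    calc μ E ≤ μ (⋃ u, p '' u.1 \ D u) + μ {x | ¬ IsClosed (p ⁻¹' {x})} := measure_union_le _ _
      _ = μ (⋃ u, p '' u.1 \ D u) := by rw [ae_iff.1 hfib, add_zero]
      _ ≤ ∑' u, μ (p '' u.1 \ D u) := measure_iUnion_le _
      _ ≤ ∑' u, (ε u : ℝ≥0∞) := ENNReal.tsum_le_tsum fun u => (hDε u).le
  have hG : c < μ (B \ toMeasurable μ E) := by
    refine lt_of_lt_of_le ?_ le_measure_sdiff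
    rw [measure_toMeasurable]
    exact lt_tsub_comm.1 hE
  obtain ⟨K, hKG, hK, hcK⟩ :=
    (hB.diff (measurableSet_toMeasurable μ E)).exists_lt_isCompact hG
  refine ⟨K, hKG.trans Set.sdiff_subset, hK.measurableSet, ?_, hcK⟩
  have hKE : ∀ x ∈ K, x ∉ E := fun x hx hxE => (hKG hx).2 (subset_toMeasurable μ E hxE)
  have hKD : ∀ u : b, K ∩ p '' u.1 = K ∩ D u := by
    refine fun u => Set.Subset.antisymm (fun x hx => ⟨hx.1, ?_⟩)
      (Set.inter_subset_inter_right _ (hDA u))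
    by_contra hxD
    exact hKE x hx.1 (Or.inl (Set.mem_iUnion.2 ⟨u, hx.2, hxD⟩))
  have hKc : ∀ u : b, IsCompact (K ∩ p '' u.1) := fun u => hKD u ▸ hK.inter (hD u)
  refine isClosed_of_closure_subset fun y hy => ?_
  obtain ⟨u₀, hu₀, hyu₀, -⟩ := hb.exists_subset_of_mem_open (Set.mem_univ y) isOpen_univ
  have : Nonempty {u : b // y ∈ u.1} := ⟨⟨⟨u₀, hu₀⟩, hyu₀⟩⟩
  obtain ⟨x, hx⟩ := IsCompact.nonempty_iInter_of_directed_nonempty_isCompact_isClosed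
    (fun u : {u : b // y ∈ u.1} => K ∩ p '' u.1.1)
    (by
      intro u v
      obtain ⟨w, hw, hyw, hwuv⟩ := hb.exists_subset_inter u.1.1 u.1.2 v.1.1 v.1.2 y ⟨u.2, v.2⟩
      rw [Set.subset_inter_iff] at hwuv
      exact ⟨⟨⟨w, hw⟩, hyw⟩, Set.inter_subset_inter_right _ (Set.image_mono hwuv.1),
        Set.inter_subset_inter_right _ (Set.image_mono hwuv.2)⟩)
    (by
      intro u
      obtain ⟨z, hzu, hzK⟩ := mem_closure_iff.1 hy u.1.1 (hb.isOpen u.1.2) u.2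
      exact ⟨p z, hzK, z, hzu, rfl⟩)
    (fun u => hKc u.1) (fun u => (hKc u.1).isClosed)
  rw [Set.mem_iInter] at hx
  have hxK : x ∈ K := (hx (Classical.arbitrary _)).1
  have hxcl : IsClosed (p ⁻¹' {x}) := by
    by_contra h
    exact hKE x hxK (Or.inr h)
  have hyx : y ∈ p ⁻¹' {x} := by
    rw [← hxcl.closure_eq, hb.mem_closure_iff]
    intro u hu hyu
    obtain ⟨-, z, hzu, hz⟩ := hx ⟨⟨u, hu⟩, hyu⟩
    exact ⟨z, hzu, hz⟩
  rw [Set.mem_preimage, Set.mem_singleton_iff] at hyx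
  rwa [Set.mem_preimage, hyx]

/-- A Borel map defined on a compact set of reals, with almost everywhere closed nonempty fibers,
has an almost everywhere measurable section: the minimum of the fiber. -/
lemma exists_aemeasurable_section_of_isCompact {X : Type*} [MeasurableSpace X]
    [StandardBorelSpace X] (μ : Measure X) [IsFiniteMeasure μ] {T : Set ℝ} (hT : IsCompact T)
    {q : T → X} (hq : Measurable q) (hne : ∀ᵐ x ∂μ, x ∈ Set.range q)
    (hfib : ∀ᵐ x ∂μ, IsClosed (q ⁻¹' {x})) :
    ∃ s : X → ℝ, AEMeasurable s μ ∧ ∀ᵐ x ∂μ, ∃ t : T, s x = t ∧ q t = x := by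
  have : CompactSpace T := isCompact_iff_compactSpace.1 hT
  have : StandardBorelSpace T := hT.measurableSet.standardBorel
  let F : X → Set ℝ := fun x => (↑) '' (q ⁻¹' {x})
  have hF : ∀ᵐ x ∂μ, IsLeast (F x) (sInf (F x)) := by
    filter_upwards [hne, hfib] with x ⟨t, ht⟩ hx
    exact (hx.isCompact.image continuous_subtype_val).isLeast_sInf ⟨t, t, ht, rfl⟩
  refine ⟨fun x => sInf (F x), ?_, ?_⟩
  · refine NullMeasurable.aemeasurable ?_
    refine measurable_of_Iio (α := ℝ) (δ := NullMeasurableSpace X μ) fun a => ?_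
    have hnull : NullMeasurableSet (q '' ((↑) ⁻¹' Set.Iio a)) μ :=
      (measurable_subtype_coe measurableSet_Iio).nullMeasurableSet_image hq
    refine hnull.congr ?_
    filter_upwards [hF] with x hx
    refine propext ⟨?_, fun h => ?_⟩
    · rintro ⟨t, hta, rfl⟩
      exact (hx.2 ⟨t, rfl, rfl⟩).trans_lt hta
    · obtain ⟨t, ht, hts⟩ := hx.1
      exact ⟨t, hts.trans_lt h, ht⟩
  · filter_upwards [hF] with x hx
    obtain ⟨t, ht, hts⟩ := hx.1
    exact ⟨t, hts.symm, ht⟩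

/-- A Borel map from a compact metrizable space onto almost all of a standard Borel probability
space, with almost everywhere closed fibers, admits a lift of the measure. -/
lemma exists_probabilityMeasure_map_eq {X : Type*} [MeasurableSpace X] [StandardBorelSpace X]
    (μ : Measure X) [IsProbabilityMeasure μ] {Y : Type*} [TopologicalSpace Y] [CompactSpace Y]
    [TopologicalSpace.MetrizableSpace Y] [MeasurableSpace Y] [BorelSpace Y]
    {p : Y → X} (hp : Measurable p) (hne : ∀ᵐ x ∂μ, x ∈ Set.range p)
    (hfib : ∀ᵐ x ∂μ, IsClosed (p ⁻¹' {x})) :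
    ∃ σ : ProbabilityMeasure Y, σ.toMeasure.map p = μ := by
  let _ := TopologicalSpace.metrizableSpaceMetric Y
  obtain ⟨-, y, -⟩ := hne.exists
  have : Nonempty Y := ⟨y⟩
  obtain ⟨g, hg, hgs⟩ := exists_nat_bool_continuous_surjective_of_compact Y
  let g' : cantorSet → Y := g ∘ cantorSetHomeomorphNatToBool
  have hg' : Continuous g' := hg.comp cantorSetHomeomorphNatToBool.continuous
  have hgs' : Function.Surjective g' := hgs.comp cantorSetHomeomorphNatToBool.surjective
  obtain ⟨s, hs, hsec⟩ := exists_aemeasurable_section_of_isCompact μ isCompact_cantorSet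
    (hp.comp hg'.measurable) (by rwa [hgs'.range_comp])
    (hfib.mono fun x hx => by rw [Set.preimage_comp]; exact hx.preimage hg')
  obtain ⟨r, hr, hrg⟩ := (MeasurableEmbedding.subtype_coe
    isCompact_cantorSet.measurableSet).exists_measurable_extend hg'.measurable
    (fun _ => inferInstance)
  have hrs : AEMeasurable (r ∘ s) μ := hr.comp_aemeasurable hs
  refine ⟨⟨μ.map (r ∘ s), Measure.isProbabilityMeasure_map hrs⟩, ?_⟩
  change (μ.map (r ∘ s)).map p = μ
  rw [AEMeasurable.map_map_of_aemeasurable hp.aemeasurable hrs]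
  conv_rhs => rw [← Measure.map_id (μ := μ)]
  refine Measure.map_congr ?_
  filter_upwards [hsec] with x ⟨t, hst, htx⟩
  rw [Function.comp_apply, Function.comp_apply, hst, ← Function.comp_apply (f := r), hrg]
  exact htx

/-- The set of lifts of a measure under a Borel map with almost everywhere closed fibers is
closed. -/
lemma isClosed_setOf_map_eq {X Y : Type*} [MeasurableSpace X] [StandardBorelSpace X]
    (μ : Measure X) [IsProbabilityMeasure μ] [TopologicalSpace Y] [PolishSpace Y]
    [MeasurableSpace Y] [BorelSpace Y] {p : Y → X} (hp : Measurable p)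
    (hfib : ∀ᵐ x ∂μ, IsClosed (p ⁻¹' {x})) :
    IsClosed {σ : ProbabilityMeasure Y | σ.toMeasure.map p = μ} := by
  let _ := TopologicalSpace.upgradeIsCompletelyMetrizable Y
  refine isClosed_iff_forall_filter.2 fun σ L hL hLM hLσ => ?_
  have : IsProbabilityMeasure (σ.toMeasure.map p) :=
    Measure.isProbabilityMeasure_map hp.aemeasurable
  refine Eq.symm ?_
  refine Measure.eq_of_le_of_isProbabilityMeasure (Measure.le_iff.2 fun B hB => ?_)
  refine le_of_forall_lt fun c hc => ?_
  obtain ⟨K, hKB, hK, hpK, hcK⟩ := exists_subset_isClosed_preimage μ hp hfib hB hc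
  refine hcK.trans_le ?_
  calc μ K = L.limsup fun τ : ProbabilityMeasure Y => τ.toMeasure (p ⁻¹' K) := by
        have : (fun τ : ProbabilityMeasure Y => τ.toMeasure (p ⁻¹' K)) =ᶠ[L] fun _ => μ K := by
          filter_upwards [Filter.le_principal_iff.1 hLM] with τ hτ
          rw [← Measure.map_apply hp hK, hτ]
        rw [Filter.limsup_congr this, Filter.limsup_const]
    _ ≤ σ.toMeasure (p ⁻¹' K) :=
        ProbabilityMeasure.limsup_measure_closed_le_of_tendsto (μs := fun τ => τ) hLσ hpK
    _ ≤ σ.toMeasure.map p B := by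
        rw [Measure.map_apply hp hB]
        exact measure_mono (Set.preimage_mono hKB)

/-- The compact case of Lemma 3.1: if `Y` is a compact metrizable space, `X` a standard Borel
space with a Borel probability measure `μ`, and `p : Y → X` a Borel map with `μ (range p) = 1`
and compact fibers `μ`-a.e., then `M = {σ ∈ P(Y) | p_* σ = μ}` is non-empty, convex, closed
(hence compact) in the weak* topology on `P(Y)`. -/
theorem lifts_nonempty_convex_closed_compact_of_compactSpace
    {X : Type*} [MeasurableSpace X] [StandardBorelSpace X]
    (μ : Measure X) [IsProbabilityMeasure μ]
    {Y : Type*} [TopologicalSpace Y] [CompactSpace Y] [TopologicalSpace.MetrizableSpace Y]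
    [MeasurableSpace Y] [BorelSpace Y]
    (p : Y → X) (hp : Measurable p)
    (hfull : μ (Set.range p) = 1)
    (hfib : ∀ᵐ x ∂μ, IsCompact (p ⁻¹' {x}))
    (M : Set (ProbabilityMeasure Y))
    (hM : M = {σ : ProbabilityMeasure Y | σ.toMeasure.map p = μ}) :
    M.Nonempty ∧
      (∀ σ ∈ M, ∀ τ ∈ M, ∀ a b : ℝ≥0∞, a + b = 1 →
        ∀ ρ : ProbabilityMeasure Y,
          ρ.toMeasure = a • σ.toMeasure + b • τ.toMeasure → ρ ∈ M) ∧
      IsClosed M ∧ IsCompact M := by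
  let _ := TopologicalSpace.metrizableSpaceMetric Y
  have hcl : ∀ᵐ x ∂μ, IsClosed (p ⁻¹' {x}) := hfib.mono fun _ hx => hx.isClosed
  have hrange : NullMeasurableSet (Set.range p) μ := by
    rw [← Set.image_univ]
    exact MeasurableSet.univ.nullMeasurableSet_image hp
  have hne : ∀ᵐ x ∂μ, x ∈ Set.range p := (prob_compl_eq_zero_iff₀ hrange).2 hfull
  have hclosed : IsClosed M := hM ▸ isClosed_setOf_map_eq μ hp hcl
  refine ⟨hM ▸ exists_probabilityMeasure_map_eq μ hp hne hcl, ?_, hclosed, hclosed.isCompact⟩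
  subst hM
  intro σ hσ τ hτ a b hab ρ hρ
  rw [Set.mem_ofPred_eq] at hσ hτ ⊢
  rw [hρ, Measure.map_add _ _ hp, Measure.map_smul, Measure.map_smul, hσ, hτ, ← add_smul, hab,
    one_smul]
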